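/- arXiv:2011.14511 — 3 statements merged into one kernel-verified Lean document; each statement's English description precedes it below -/
import Mathlib

section
/- Let E be a real inner product space and let a, b, c ∈ E. Then ⟨a − b, (3/4)a + (1/4)c⟩ = (1/2)(‖a‖² − ‖b‖²) + (1/8)(‖a − b‖² − ‖b − c‖²) + (1/8)‖a − 2b + c‖². (This is the key identity used to test the modified Crank–Nicolson time difference (H^{n+1} − H^n)/τ against the Adams–Moulton average (3/4)H^{n+1} + (1/4)H^{n−1}, yielding a telescoping energy plus nonnegative remainder.) -/
open RealInnerProductSpace

/-- The key identity (3.37) used to test the modified Crank–Nicolson time difference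
against the Adams–Moulton average `(3/4) a + (1/4) c`. -/
theorem modified_crank_nicolson_identity
    {E : Type*} [NormedAddCommGroup E] [InnerProductSpace ℝ E] (a b c : E) :
    ⟪a - b, (3/4 : ℝ) • a + (1/4 : ℝ) • c⟫ =
      (1/2) * (‖a‖^2 - ‖b‖^2) + (1/8) * (‖a - b‖^2 - ‖b - c‖^2)
        + (1/8) * ‖a - (2 : ℝ) • b + c‖^2 := by
  simp only [← real_inner_self_eq_norm_sq, inner_add_left, inner_add_right, inner_sub_left,
    inner_sub_right, real_inner_smul_left, real_inner_smul_right]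
  rw [real_inner_comm a b, real_inner_comm a c, real_inner_comm b c]
  ring
end

section
/- Let μ, σ, ν > 0 and let H, u : ℝ × ℝ³ → ℝ³, p : ℝ × ℝ³ → ℝ be smooth functions such that for all t the spatial supports of H(t,·) and u(t,·) are contained in a fixed compact set K ⊂ ℝ³, and such that pointwise on ℝ × ℝ³: μ∂ₜH + σ⁻¹∇×(∇×H) − μ∇×(u×H) = 0, ∂ₜu + (u·∇)u − νΔu + ∇p = −μH×(∇×H), and ∇·u = 0 (spatial differential operators in the space variable). Then the total energy t ↦ (μ/2)∫_{ℝ³}‖H(t,x)‖² dx + (1/2)∫_{ℝ³}‖u(t,x)‖² dx is nonincreasing in t. -/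
open MeasureTheory

/-- Partial derivative `∂_j f` of a scalar field on `ℝ³`. -/
noncomputable def pd (j : Fin 3) (f : (Fin 3 → ℝ) → ℝ) (x : Fin 3 → ℝ) : ℝ :=
  fderiv ℝ f x (Pi.single j 1)

/-- Curl of a vector field on `ℝ³`. -/
noncomputable def curl (F : (Fin 3 → ℝ) → (Fin 3 → ℝ)) (x : Fin 3 → ℝ) : Fin 3 → ℝ :=
  ![pd 1 (fun y => F y 2) x - pd 2 (fun y => F y 1) x,
    pd 2 (fun y => F y 0) x - pd 0 (fun y => F y 2) x,
    pd 0 (fun y => F y 1) x - pd 1 (fun y => F y 0) x]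

/-- Divergence of a vector field on `ℝ³`. -/
noncomputable def div3 (F : (Fin 3 → ℝ) → (Fin 3 → ℝ)) (x : Fin 3 → ℝ) : ℝ :=
  ∑ j, pd j (fun y => F y j) x

/-- Cross product in `ℝ³`. -/
def cross (a b : Fin 3 → ℝ) : Fin 3 → ℝ :=
  ![a 1 * b 2 - a 2 * b 1, a 2 * b 0 - a 0 * b 2, a 0 * b 1 - a 1 * b 0]

/-- Directional derivative `(F·∇)G`, with `i`-th component `Σ_j F_j ∂_j G_i`. -/
noncomputable def dirDeriv (F G : (Fin 3 → ℝ) → (Fin 3 → ℝ)) (x : Fin 3 → ℝ) : Fin 3 → ℝ :=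
  fun i => ∑ j, F x j * pd j (fun y => G y i) x

/-- Componentwise Laplacian of a vector field on `ℝ³`. -/
noncomputable def lap (F : (Fin 3 → ℝ) → (Fin 3 → ℝ)) (x : Fin 3 → ℝ) : Fin 3 → ℝ :=
  fun i => ∑ j, pd j (fun y => pd j (fun z => F z i) y) x

/-- Gradient of a scalar field on `ℝ³`. -/
noncomputable def grad (p : (Fin 3 → ℝ) → ℝ) (x : Fin 3 → ℝ) : Fin 3 → ℝ :=
  fun i => pd i p x

lemma pd_mul' {j : Fin 3} {f g : (Fin 3 → ℝ) → ℝ} {x : Fin 3 → ℝ}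
    (hf : Differentiable ℝ f) (hg : Differentiable ℝ g) :
    pd j (fun y => f y * g y) x = pd j f x * g x + f x * pd j g x := by
  simp [pd, fderiv_fun_mul (hf x) (hg x)]; ring

lemma pd_sub' {j : Fin 3} {f g : (Fin 3 → ℝ) → ℝ} {x : Fin 3 → ℝ}
    (hf : Differentiable ℝ f) (hg : Differentiable ℝ g) :
    pd j (fun y => f y - g y) x = pd j f x - pd j g x := by
  simp [pd, fderiv_fun_sub (hf x) (hg x)]

lemma pd_add' {j : Fin 3} {f g : (Fin 3 → ℝ) → ℝ} {x : Fin 3 → ℝ}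
    (hf : Differentiable ℝ f) (hg : Differentiable ℝ g) :
    pd j (fun y => f y + g y) x = pd j f x + pd j g x := by
  simp [pd, fderiv_fun_add (hf x) (hg x)]

lemma pd_smooth {j : Fin 3} {f : (Fin 3 → ℝ) → ℝ} (hf : ContDiff ℝ (⊤ : ℕ∞) f) :
    ContDiff ℝ (⊤ : ℕ∞) (pd j f) := by
  unfold pd
  exact (hf.fderiv_right (m := (⊤ : ℕ∞)) (by simp)).clm_apply contDiff_const

lemma pd_int {j : Fin 3} {f : (Fin 3 → ℝ) → ℝ} (hf : ContDiff ℝ (⊤ : ℕ∞) f)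
    {K : Set (Fin 3 → ℝ)} (hK : IsCompact K) (h0 : ∀ x, x ∉ K → f x = 0) :
    Integrable (pd j f) ∧ ∫ x, pd j f x = 0 := by
  have hc : HasCompactSupport f := HasCompactSupport.intro hK h0
  have hi : Integrable (pd j f) := by
    refine (pd_smooth hf).continuous.integrable_of_hasCompactSupport ?_
    exact hc.fderiv_apply (𝕜 := ℝ) _
  refine ⟨hi, ?_⟩
  have := integral_mul_fderiv_eq_neg_fderiv_mul_of_integrable (μ := (volume : Measure (Fin 3 → ℝ)))
    (f := fun _ => (1:ℝ)) (g := f) (v := Pi.single j 1) (by simp)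
    (by simpa [pd] using (show Integrable (fun x => pd j f x) from hi)) (by simpa using hf.continuous.integrable_of_hasCompactSupport hc)
    (by simp) (fun x _ => hf.differentiable (by simp) x)
  simpa [pd] using this

lemma div_int {F : (Fin 3 → ℝ) → (Fin 3 → ℝ)} (hF : ∀ i, ContDiff ℝ (⊤ : ℕ∞) (fun y => F y i))
    {K : Set (Fin 3 → ℝ)} (hK : IsCompact K) (h0 : ∀ x, x ∉ K → F x = 0) :
    Integrable (div3 F) ∧ ∫ x, div3 F x = 0 := by
  have h := fun j : Fin 3 => pd_int (j := j) (hF j) hK (fun x hx => by simp [h0 x hx])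
  unfold div3
  refine ⟨integrable_finsetSum _ fun j _ => (h j).1, ?_⟩
  rw [integral_finsetSum _ fun j _ => (h j).1]
  exact Finset.sum_eq_zero fun j _ => (h j).2

lemma div_cross {A B : (Fin 3 → ℝ) → (Fin 3 → ℝ)}
    (hA : ∀ i, Differentiable ℝ (fun y => A y i)) (hB : ∀ i, Differentiable ℝ (fun y => B y i))
    (x : Fin 3 → ℝ) :
    div3 (fun y => cross (A y) (B y)) x
      = ∑ i, B x i * curl A x i - ∑ i, A x i * curl B x i := by
  have hm : ∀ i j, Differentiable ℝ (fun y => A y i * B y j) := fun i j => (hA i).fun_mul (hB j)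
  simp only [div3, cross, curl, Fin.sum_univ_three, Matrix.cons_val]
  simp only [pd_sub' (hm _ _) (hm _ _), pd_mul' (hA _) (hB _)]
  ring

lemma div_scal {A : (Fin 3 → ℝ) → (Fin 3 → ℝ)} {q : (Fin 3 → ℝ) → ℝ}
    (hA : ∀ i, Differentiable ℝ (fun y => A y i)) (hq : Differentiable ℝ q)
    (x : Fin 3 → ℝ) :
    div3 (fun y i => A y i * q y) x = div3 A x * q x + ∑ i, A x i * grad q x i := by
  simp only [div3, grad, Fin.sum_univ_three, pd_mul' (hA _) hq]
  ring

lemma grad_sq {A : (Fin 3 → ℝ) → (Fin 3 → ℝ)}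
    (hA : ∀ i, Differentiable ℝ (fun y => A y i)) (x : Fin 3 → ℝ) :
    ∑ i, A x i * grad (fun y => ∑ k, A y k * A y k) x i = 2 * ∑ i, A x i * dirDeriv A A x i := by
  have hm : ∀ i, Differentiable ℝ (fun y => A y i * A y i) := fun i => (hA i).fun_mul (hA i)
  simp only [grad, dirDeriv, Fin.sum_univ_three]
  simp only [pd_add' ((hm 0).fun_add (hm 1)) (hm 2), pd_add' (hm 0) (hm 1), pd_mul' (hA _) (hA _)]
  ring

lemma div_lap {A : (Fin 3 → ℝ) → (Fin 3 → ℝ)}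
    (hA : ∀ i, ContDiff ℝ (⊤ : ℕ∞) (fun y => A y i)) (x : Fin 3 → ℝ) :
    div3 (fun y j => ∑ i, A y i * pd j (fun z => A z i) y) x
      = ∑ i, A x i * lap A x i + ∑ i, ∑ j, (pd j (fun z => A z i) x) ^ 2 := by
  have h1 : ∀ i, Differentiable ℝ (fun y => A y i) := fun i => (hA i).differentiable (by simp)
  have h2 : ∀ i j, Differentiable ℝ (fun y => pd j (fun z => A z i) y) :=
    fun i j => (pd_smooth (hA i)).differentiable (by simp)
  have hm : ∀ i j, Differentiable ℝ (fun y => A y i * pd j (fun z => A z i) y) :=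
    fun i j => (h1 i).fun_mul (h2 i j)
  simp only [div3, lap, Fin.sum_univ_three]
  simp only [pd_add' ((hm 0 _).fun_add (hm 1 _)) (hm 2 _), pd_add' (hm 0 _) (hm 1 _),
    pd_mul' (h1 _) (h2 _ _)]
  ring

lemma curl_smooth {A : (Fin 3 → ℝ) → (Fin 3 → ℝ)}
    (hA : ∀ i, ContDiff ℝ (⊤ : ℕ∞) (fun y => A y i)) (i : Fin 3) :
    ContDiff ℝ (⊤ : ℕ∞) (fun y => curl A y i) := by
  fin_cases i <;> exact (pd_smooth (hA _)).sub (pd_smooth (hA _))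

lemma cross_smooth {A B : (Fin 3 → ℝ) → (Fin 3 → ℝ)}
    (hA : ∀ i, ContDiff ℝ (⊤ : ℕ∞) (fun y => A y i))
    (hB : ∀ i, ContDiff ℝ (⊤ : ℕ∞) (fun y => B y i)) (i : Fin 3) :
    ContDiff ℝ (⊤ : ℕ∞) (fun y => cross (A y) (B y) i) := by
  fin_cases i <;> exact ((hA _).mul (hB _)).sub ((hA _).mul (hB _))

/-- differentiation under the integral sign -/
lemma time_deriv {g : ℝ × (Fin 3 → ℝ) → ℝ} (hg : ContDiff ℝ (⊤ : ℕ∞) g)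
    {K : Set (Fin 3 → ℝ)} (hK : IsCompact K) (h0 : ∀ t x, x ∉ K → g (t, x) = 0) (t : ℝ) :
    Integrable (fun x => deriv (fun s => g (s, x)) t) ∧
    HasDerivAt (fun s => ∫ x, g (s, x)) (∫ x, deriv (fun s => g (s, x)) t) t := by
  have hd : ∀ s x, HasDerivAt (fun s => g (s, x)) (fderiv ℝ g (s, x) (1, 0)) s := by
    intro s x
    have h1 := (hg.differentiable (by simp) (s, x)).hasFDerivAt
    have h2 : HasDerivAt (fun s : ℝ => (s, x)) ((1 : ℝ), (0 : Fin 3 → ℝ)) s :=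
      (hasDerivAt_id s).prodMk (hasDerivAt_const s x)
    exact h1.comp_hasDerivAt s h2
  have hcont : Continuous (fun q : ℝ × (Fin 3 → ℝ) => fderiv ℝ g q (1, 0)) :=
    (hg.continuous_fderiv (by simp)).clm_apply continuous_const
  have hz : ∀ s x, x ∉ K → fderiv ℝ g (s, x) (1, 0) = 0 := by
    intro s x hx
    rw [← (hd s x).deriv]
    simp [h0 _ x hx]
  obtain ⟨C, hC⟩ := ((isCompact_closedBall t 1).prod hK).exists_bound_of_continuousOn
    hcont.continuousOn
  have hgi : ∀ s, Integrable (fun x => g (s, x)) := fun s =>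
    (hg.continuous.comp (by fun_prop : Continuous fun x => (s, x))).integrable_of_hasCompactSupport
      (HasCompactSupport.intro hK (h0 s))
  have := hasDerivAt_integral_of_dominated_loc_of_deriv_le (μ := (volume : Measure (Fin 3 → ℝ)))
    (F := fun s x => g (s, x)) (F' := fun s x => fderiv ℝ g (s, x) (1, 0)) (x₀ := t)
    (s := Metric.closedBall t 1) (bound := K.indicator fun _ => C)
    (Metric.closedBall_mem_nhds t one_pos)
    (Filter.Eventually.of_forall fun s => (hgi s).aestronglyMeasurable) (hgi t)
    (hcont.comp (by fun_prop : Continuous fun x => (t, x))).aestronglyMeasurable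
    (Filter.Eventually.of_forall fun x s hs => by
      by_cases hx : x ∈ K
      · simpa [hx] using hC (s, x) ⟨hs, hx⟩
      · simp [hx, hz s x hx])
    ((integrable_indicator_iff hK.measurableSet).2
      (integrableOn_const hK.measure_lt_top.ne))
    (Filter.Eventually.of_forall fun x s _ => hd s x)
  simpa only [(hd _ _).deriv] using this

/-- Energy decay (1.6) for the incompressible MHD system with zero sources `J = f = 0`:
the total energy `(μ/2)∫‖H‖² + (1/2)∫‖u‖²` is nonincreasing in time. -/
theorem mhd_energy_decay
    (μ σ ν : ℝ) (hμ : 0 < μ) (hσ : 0 < σ) (hν : 0 < ν)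
    (H u : ℝ → (Fin 3 → ℝ) → (Fin 3 → ℝ)) (p : ℝ → (Fin 3 → ℝ) → ℝ)
    (hH : ContDiff ℝ (⊤ : ℕ∞) (fun q : ℝ × (Fin 3 → ℝ) => H q.1 q.2))
    (hu : ContDiff ℝ (⊤ : ℕ∞) (fun q : ℝ × (Fin 3 → ℝ) => u q.1 q.2))
    (hp : ContDiff ℝ (⊤ : ℕ∞) (fun q : ℝ × (Fin 3 → ℝ) => p q.1 q.2))
    (K : Set (Fin 3 → ℝ)) (hK : IsCompact K)
    (hHsupp : ∀ t, tsupport (H t) ⊆ K) (husupp : ∀ t, tsupport (u t) ⊆ K)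
    (heqH : ∀ t x, μ • deriv (fun s => H s x) t + σ⁻¹ • curl (curl (H t)) x
        - μ • curl (fun y => cross (u t y) (H t y)) x = 0)
    (hequ : ∀ t x, deriv (fun s => u s x) t + dirDeriv (u t) (u t) x
        - ν • lap (u t) x + grad (p t) x = -(μ • cross (H t x) (curl (H t) x)))
    (hdiv : ∀ t x, div3 (u t) x = 0) :
    Antitone
      (fun t => (μ/2) * (∫ x, ∑ i, (H t x i)^2) + (1/2) * (∫ x, ∑ i, (u t x i)^2)) := by
  have hHi : ∀ i, ContDiff ℝ (⊤ : ℕ∞) (fun q : ℝ × (Fin 3 → ℝ) => H q.1 q.2 i) :=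
    fun i => contDiff_pi.1 hH i
  have hui : ∀ i, ContDiff ℝ (⊤ : ℕ∞) (fun q : ℝ × (Fin 3 → ℝ) => u q.1 q.2 i) :=
    fun i => contDiff_pi.1 hu i
  have hH0 : ∀ t x, x ∉ K → H t x = 0 := fun t x hx =>
    image_eq_zero_of_notMem_tsupport fun h => hx (hHsupp t h)
  have hu0 : ∀ t x, x ∉ K → u t x = 0 := fun t x hx =>
    image_eq_zero_of_notMem_tsupport fun h => hx (husupp t h)
  have hsl : ∀ t : ℝ, ContDiff ℝ (⊤ : ℕ∞) (fun x : Fin 3 → ℝ => (t, x)) := fun t => by fun_prop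
  have hslt : ∀ x : Fin 3 → ℝ, ContDiff ℝ (⊤ : ℕ∞) (fun t : ℝ => (t, x)) := fun t => by fun_prop
  have hHt : ∀ t i, ContDiff ℝ (⊤ : ℕ∞) (fun x => H t x i) := fun t i => (hHi i).comp (hsl t)
  have hut : ∀ t i, ContDiff ℝ (⊤ : ℕ∞) (fun x => u t x i) := fun t i => (hui i).comp (hsl t)
  have hpt : ∀ t, ContDiff ℝ (⊤ : ℕ∞) (p t) := fun t => hp.comp (hsl t)
  have hHd : ∀ x t i, HasDerivAt (fun s => H s x i) (deriv (fun s => H s x) t i) t := by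
    intro x t
    exact hasDerivAt_pi.1 (((hH.comp (hslt x)).differentiable (by simp) t).hasDerivAt)
  have hud : ∀ x t i, HasDerivAt (fun s => u s x i) (deriv (fun s => u s x) t i) t := by
    intro x t
    exact hasDerivAt_pi.1 (((hu.comp (hslt x)).differentiable (by simp) t).hasDerivAt)
  let e : ℝ × (Fin 3 → ℝ) → ℝ := fun q =>
    (μ/2) * ∑ i, (H q.1 q.2 i)^2 + (1/2) * ∑ i, (u q.1 q.2 i)^2
  have he : ContDiff ℝ (⊤ : ℕ∞) e :=
    (contDiff_const.mul (ContDiff.sum fun i _ => (hHi i).pow 2)).add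
      (contDiff_const.mul (ContDiff.sum fun i _ => (hui i).pow 2))
  have he0 : ∀ t x, x ∉ K → e (t, x) = 0 := by
    intro t x hx
    simp [e, hH0 t x hx, hu0 t x hx]
  have hE : (fun t => (μ/2) * (∫ x, ∑ i, (H t x i)^2) + (1/2) * (∫ x, ∑ i, (u t x i)^2))
      = fun t => ∫ x, e (t, x) := by
    funext t
    have i1 : Integrable (fun x => ∑ i, (H t x i)^2) :=
      (ContDiff.sum fun i _ => (hHt t i).pow 2).continuous.integrable_of_hasCompactSupport
        (HasCompactSupport.intro hK fun x hx => by simp [hH0 t x hx])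
    have i2 : Integrable (fun x => ∑ i, (u t x i)^2) :=
      (ContDiff.sum fun i _ => (hut t i).pow 2).continuous.integrable_of_hasCompactSupport
        (HasCompactSupport.intro hK fun x hx => by simp [hu0 t x hx])
    simp only [e]
    rw [integral_add (i1.const_mul _) (i2.const_mul _), integral_const_mul, integral_const_mul]
  rw [hE]
  refine antitone_of_deriv_nonpos
    (fun t => (time_deriv he hK he0 t).2.differentiableAt) fun t => ?_
  rw [(time_deriv he hK he0 t).2.deriv]
  have hDe : ∀ x, deriv (fun s => e (s, x)) t
      = ∑ i, H t x i * (μ * deriv (fun s => H s x) t i)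
        + ∑ i, u t x i * deriv (fun s => u s x) t i := by
    intro x
    have h1 := HasDerivAt.fun_sum (u := Finset.univ) fun i _ => (hHd x t i).fun_pow 2
    have h2 := HasDerivAt.fun_sum (u := Finset.univ) fun i _ => (hud x t i).fun_pow 2
    have h3 := ((h1.const_mul (μ/2)).fun_add (h2.const_mul (1/2))).deriv
    simp only [e]
    rw [h3]
    simp only [Fin.sum_univ_three]
    push_cast
    ring
  have dH : ∀ i, Differentiable ℝ (fun y => H t y i) := fun i => (hHt t i).differentiable (by simp)
  have du : ∀ i, Differentiable ℝ (fun y => u t y i) := fun i => (hut t i).differentiable (by simp)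
  have sC := curl_smooth (hHt t)
  have sW := cross_smooth (hut t) (hHt t)
  have dC : ∀ i, Differentiable ℝ (fun y => curl (H t) y i) :=
    fun i => (sC i).differentiable (by simp)
  have dW : ∀ i, Differentiable ℝ (fun y => cross (u t y) (H t y) i) :=
    fun i => (sW i).differentiable (by simp)
  have ssq : ContDiff ℝ (⊤ : ℕ∞) (fun y => ∑ k, u t y k * u t y k) :=
    ContDiff.sum fun i _ => (hut t i).mul (hut t i)
  -- the five divergence terms
  have I1 := div_int (F := fun y j => ∑ i, u t y i * pd j (fun z => u t z i) y)
    (fun j => ContDiff.sum fun i _ => (hut t i).mul (pd_smooth (hut t i))) hK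
    (fun x hx => by funext j; simp [hu0 t x hx])
  have I2 := div_int (F := fun y i => u t y i * ∑ k, u t y k * u t y k)
    (fun j => (hut t j).mul ssq) hK (fun x hx => by funext j; simp [hu0 t x hx])
  have I3 := div_int (F := fun y i => u t y i * p t y)
    (fun j => (hut t j).mul (hpt t)) hK (fun x hx => by funext j; simp [hu0 t x hx])
  have I4 := div_int (F := fun y => cross (curl (H t) y) (H t y))
    (cross_smooth sC (hHt t)) hK
    (fun x hx => by funext j; fin_cases j <;> simp [cross, hH0 t x hx])
  have I5 := div_int (F := fun y => cross (cross (u t y) (H t y)) (H t y))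
    (cross_smooth sW (hHt t)) hK
    (fun x hx => by funext j; fin_cases j <;> simp [cross, hH0 t x hx])
  have e1 := div_lap (hut t)
  have e2 := div_scal du (ssq.differentiable (by simp))
  have e2' := grad_sq du
  have e3 := div_scal du ((hpt t).differentiable (by simp))
  have e4 := div_cross dC dH
  have e5 := div_cross (A := fun y => cross (u t y) (H t y)) dW dH
  generalize hg1 : div3 (fun y j => ∑ i, u t y i * pd j (fun z => u t z i) y) = g1 at *
  generalize hg2 : div3 (fun y i => u t y i * ∑ k, u t y k * u t y k) = g2 at *
  generalize hg3 : div3 (fun y i => u t y i * p t y) = g3 at *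
  generalize hg4 : div3 (fun y => cross (curl (H t) y) (H t y)) = g4 at *
  generalize hg5 : div3 (fun y => cross (cross (u t y) (H t y)) (H t y)) = g5 at *
  have J1 : Integrable (fun x => ν * g1 x - 1/2 * g2 x) :=
    (I1.1.const_mul ν).sub (I2.1.const_mul (1/2))
  have J2 : Integrable (fun x => ν * g1 x - 1/2 * g2 x - g3 x) := J1.sub I3.1
  have J3 : Integrable (fun x => ν * g1 x - 1/2 * g2 x - g3 x - σ⁻¹ * g4 x) :=
    J2.sub (I4.1.const_mul σ⁻¹)
  have J : Integrable (fun x => ν * g1 x - 1/2 * g2 x - g3 x - σ⁻¹ * g4 x + μ * g5 x) :=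
    J3.add (I5.1.const_mul μ)
  have hJ0 : ∫ x, (ν * g1 x - 1/2 * g2 x - g3 x - σ⁻¹ * g4 x + μ * g5 x) = 0 := by
    rw [integral_add J3 (I5.1.const_mul μ), integral_sub J2 (I4.1.const_mul σ⁻¹),
      integral_sub J1 I3.1, integral_sub (I1.1.const_mul ν) (I2.1.const_mul (1/2))]
    simp only [integral_const_mul, I1.2, I2.2, I3.2, I4.2, I5.2]
    simp
  rw [← hJ0]
  refine integral_mono (time_deriv he hK he0 t).1 J fun x => ?_
  show deriv (fun s => e (s, x)) t ≤ ν * g1 x - 1/2 * g2 x - g3 x - σ⁻¹ * g4 x + μ * g5 x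
  rw [hDe x, e1, e2, e2', e3, e4, e5, hdiv t x]
  have q1 : ∀ i, μ * deriv (fun s => H s x) t i
      = μ * curl (fun y => cross (u t y) (H t y)) x i - σ⁻¹ * curl (curl (H t)) x i := by
    intro i
    have := congrFun (heqH t x) i
    simp only [Pi.add_apply, Pi.sub_apply, Pi.smul_apply, smul_eq_mul, Pi.zero_apply] at this
    linarith
  have q2 : ∀ i, deriv (fun s => u s x) t i
      = ν * lap (u t) x i - dirDeriv (u t) (u t) x i - grad (p t) x i
        - μ * cross (H t x) (curl (H t) x) i := by
    intro i
    have := congrFun (hequ t x) i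
    simp only [Pi.add_apply, Pi.sub_apply, Pi.smul_apply, smul_eq_mul, Pi.neg_apply] at this
    linarith
  simp only [q1, q2]
  have n1 : 0 ≤ ν * ∑ i, ∑ j, (pd j (fun z => u t z i) x) ^ 2 :=
    mul_nonneg hν.le (Finset.sum_nonneg fun i _ => Finset.sum_nonneg fun j _ => sq_nonneg _)
  have n2 : 0 ≤ σ⁻¹ * ∑ i, curl (H t) x i * curl (H t) x i :=
    mul_nonneg (inv_pos.2 hσ).le (Finset.sum_nonneg fun i _ => mul_self_nonneg _)
  rw [mul_add ν]
  generalize ν * ∑ i, ∑ j, (pd j (fun z => u t z i) x) ^ 2 = N at n1 ⊢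
  generalize curl (fun y => cross (u t y) (H t y)) x = cW
  generalize curl (curl (H t)) x = cC
  generalize curl (H t) x = C at n2 ⊢
  generalize lap (u t) x = L
  generalize dirDeriv (u t) (u t) x = D
  generalize grad (p t) x = G
  simp only [cross, Fin.sum_univ_three, Matrix.cons_val] at n2 ⊢
  linarith
end

section
/- Let E be a real normed vector space, let f : ℝ → E be twice continuously differentiable, let t ∈ ℝ and τ > 0, and suppose ‖f''(s)‖ ≤ M for all s ∈ [t−τ, t+τ]. Then ‖(3/4)f(t+τ) + (1/4)f(t−τ) − f(t + τ/2)‖ ≤ (3/8)Mτ². (This is the second-order consistency of the implicit Adams–Moulton average (3/4)H^{n+1} + (1/4)H^{n−1} used in the modified Crank–Nicolson discretization of the magnetic diffusion term.) -/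
theorem am_taylor_aux {E : Type*} [NormedAddCommGroup E] [NormedSpace ℝ E]
    (f : ℝ → E) (hf : ContDiff ℝ 2 f) (c σ h M a b : ℝ) (hσ : |σ| = 1) (hh : 0 ≤ h)
    (hc : c ∈ Set.Icc a b) (hmem : ∀ x ∈ Set.Icc 0 h, c + σ * x ∈ Set.Icc a b)
    (hM : ∀ s ∈ Set.Icc a b, ‖iteratedDeriv 2 f s‖ ≤ M) :
    ‖f (c + σ * h) - f c - (σ * h) • deriv f c‖ ≤ M * h ^ 2 / 2 := by
  have hd : Differentiable ℝ f := hf.differentiable (by norm_num)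
  have hd2 : Differentiable ℝ (deriv f) := by
    have := hf.differentiable_iteratedDeriv 1 (by norm_num)
    simpa [iteratedDeriv_one] using this
  have hM' : ∀ s ∈ Set.Icc a b, ‖deriv (deriv f) s‖ ≤ M := by
    intro s hs
    have := hM s hs
    rwa [iteratedDeriv_succ, iteratedDeriv_one] at this
  have hG : ∀ x, HasDerivAt (fun x => f (c + σ * x) - f c - (σ * x) • deriv f c)
      (σ • deriv f (c + σ * x) - σ • deriv f c) x := by
    intro x
    have h0 : HasDerivAt (fun x : ℝ => σ * x) σ x := by
      simpa using (hasDerivAt_id x).const_mul σ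
    have h1 := (hd (c + σ * x)).hasDerivAt.scomp x (h0.const_add c)
    exact (h1.sub_const (f c)).sub (h0.smul_const (deriv f c))
  refine image_norm_le_of_norm_deriv_right_le_deriv_boundary (a := 0) (b := h)
    (f := fun x => f (c + σ * x) - f c - (σ * x) • deriv f c)
    (f' := fun x => σ • deriv f (c + σ * x) - σ • deriv f c)
    (B := fun x => M * x ^ 2 / 2) (B' := fun x => M * x)
    (fun x _ => (hG x).continuousAt.continuousWithinAt)
    (fun x _ => (hG x).hasDerivWithinAt) (by simp) ?_ ?_ (Set.right_mem_Icc.2 hh)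
  · intro x
    have := ((hasDerivAt_pow 2 x).const_mul M).div_const 2
    refine this.congr_deriv ?_
    norm_num
    ring
  · intro x hx
    have := (convex_Icc a b).norm_image_sub_le_of_norm_deriv_le (𝕜 := ℝ)
      (fun y _ => hd2 y) hM' hc (hmem x ⟨hx.1, hx.2.le⟩)
    rw [← smul_sub, norm_smul, Real.norm_eq_abs, hσ, one_mul]
    simpa [abs_mul, hσ, abs_of_nonneg hx.1] using this

/-- Second-order consistency of the implicit Adams–Moulton average
`(3/4)f(t+τ) + (1/4)f(t−τ)` at the half time level `t + τ/2`. -/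
theorem adams_moulton_average_consistency
    {E : Type*} [NormedAddCommGroup E] [NormedSpace ℝ E]
    (f : ℝ → E) (hf : ContDiff ℝ 2 f) (t τ M : ℝ) (hτ : 0 < τ)
    (hM : ∀ s ∈ Set.Icc (t - τ) (t + τ), ‖iteratedDeriv 2 f s‖ ≤ M) :
    ‖(3/4 : ℝ) • f (t + τ) + (1/4 : ℝ) • f (t - τ) - f (t + τ/2)‖ ≤ 3/8 * M * τ^2 := by
  have hc : t + τ/2 ∈ Set.Icc (t - τ) (t + τ) := ⟨by linarith, by linarith⟩
  have h1 := am_taylor_aux f hf (t + τ/2) 1 (τ/2) M _ _ (by simp) (by linarith) hc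
    (fun x hx => ⟨by linarith [hx.1], by linarith [hx.2]⟩) hM
  have h2 := am_taylor_aux f hf (t + τ/2) (-1) (3*τ/2) M _ _ (by simp) (by linarith) hc
    (fun x hx => ⟨by linarith [hx.2], by linarith [hx.1]⟩) hM
  rw [show t + τ/2 + 1 * (τ/2) = t + τ by ring] at h1
  rw [show t + τ/2 + -1 * (3*τ/2) = t - τ by ring] at h2
  set d := deriv f (t + τ/2)
  have key : (3/4 : ℝ) • f (t + τ) + (1/4 : ℝ) • f (t - τ) - f (t + τ/2)
      = (3/4 : ℝ) • (f (t + τ) - f (t + τ/2) - (1 * (τ/2)) • d)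
        + (1/4 : ℝ) • (f (t - τ) - f (t + τ/2) - (-1 * (3*τ/2)) • d) := by
    module
  rw [key]
  refine (norm_add_le _ _).trans ?_
  rw [norm_smul, norm_smul, Real.norm_of_nonneg (by norm_num : (0:ℝ) ≤ 3/4),
    Real.norm_of_nonneg (by norm_num : (0:ℝ) ≤ 1/4)]
  nlinarith
end
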